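/- Let u be a positive odd integer, let p and q be primes with p ≡ 3 (mod 4), q ≡ 1 (mod 4), and Legendre symbol (q/p) = -1, and let L = ℚ(√(-pq)). Assume that Cl(L) is isomorphic to C₂ × A for a finite abelian group A of odd order. Let ℓ be an odd prime that splits in L and let 𝔩 be a prime ideal of the ring of integers of L above ℓ. If the order of the class of 𝔩 in Cl(L) equals 2u, then (ℓ/p) = -1 and there exist integers X, Y with X² + pqY² = 4ℓᵘp. If the order of the class of 𝔩 in Cl(L) equals u, then (ℓ/p) = 1 and there exist integers X, Y with X² + pqY² = 4ℓᵘ. -/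

import Mathlib

open NumberField

/-- `Qsqrt m` is the subfield `ℚ(√m)` of `ℂ`, generated by a square root of `m`. -/
noncomputable def Qsqrt (m : ℤ) : IntermediateField ℚ ℂ :=
  IntermediateField.adjoin ℚ {(m : ℂ) ^ ((1 : ℂ) / 2)}

/-!
An integer `x = a + b√(-pq)` of `K = ℚ(√(-pq))` satisfies `(2a)² + pq(2b)² = 4 N(x)` with `2a` and
`2b` integers, and this equation modulo `p` shows that a principal ideal of norm `N` prime to `p`
has `(N/p) = 1`.  The ramified prime `P` with `P² = (p)` is not principal: otherwise the equation
for `N = p`, divided by `p`, would give `1 = (1/p) = (q/p)`.  If `I` is a non-principal ideal with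
principal square and the class group has only one element of order two, then `I` and `P` lie in the
same class, so `I P` is principal, and the equation for `N(I) p`, divided by `p`, gives
`(N(I)/p) = (q/p) = -1`.  The theorem is the case `I = 𝔩ᵘ`, where `(N(I)/p) = (ℓ/p)ᵘ = (ℓ/p)` as `u`
is odd.
-/

section Squarefree

variable {R K : Type*} [CommRing R] [IsDomain R] [UniqueFactorizationMonoid R]
  [Field K] [Algebra R K] [IsFractionRing R K]

lemma isInteger_of_squarefree_mul_sq {d : R} (hd : Squarefree d) {x : K}
    (hx : IsLocalization.IsInteger R (algebraMap R K d * x ^ 2)) :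
    IsLocalization.IsInteger R x := by
  obtain ⟨m, hm⟩ := hx
  apply IsFractionRing.isInteger_of_isUnit_den
  let a := IsFractionRing.num R x
  let b : R := IsFractionRing.den R x
  have hb : algebraMap R K b ≠ 0 :=
    IsFractionRing.to_map_ne_zero_of_mem_nonZeroDivisors (IsFractionRing.den R x).2
  have hxab : x * algebraMap R K b = algebraMap R K a := by
    rw [← IsFractionRing.mk'_num_den' R x, div_mul_cancel₀ _ hb]
  have hclear : d * a ^ 2 = b ^ 2 * m := by
    apply IsFractionRing.injective R K
    simp only [map_mul, map_pow, ← hxab, hm]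
    ring
  have hcop : IsRelPrime (b ^ 2) (a ^ 2) := (IsFractionRing.num_den_reduced R x).symm.pow
  have hdvd : b ^ 2 ∣ d := hcop.dvd_of_dvd_mul_right ⟨m, hclear⟩
  exact hd b (sq b ▸ hdvd)

end Squarefree

section InvolutionsAndSquares

lemma subsingleton_setOf_orderOf_eq_two_of_mulEquiv {G A : Type*} [Group G] [Group A]
    (hA : Odd (Nat.card A)) (e : G ≃* Multiplicative (ZMod 2) × A) :
    {g : G | orderOf g = 2}.Subsingleton := by
  have snd_eq_one {x : G} (hx : orderOf x = 2) : (e x).2 = 1 := by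
    have hsq : (e x).2 ^ 2 = 1 := by
      rw [← Prod.pow_snd, ← map_pow, orderOf_dvd_iff_pow_eq_one.mp hx.dvd, map_one, Prod.snd_one]
    exact orderOf_eq_one_iff.mp <| Nat.eq_one_of_dvd_coprimes hA.coprime_two_left
      (orderOf_dvd_of_pow_eq_one hsq) (orderOf_dvd_natCard _)
  have fst_ne_one {x : G} (hx : orderOf x = 2) : (e x).1 ≠ 1 := fun h ↦ by
    have : x = 1 := e.map_eq_one_iff.mp (Prod.ext h (snd_eq_one hx))
    simp [this] at hx
  have eq_of_ne_one : ∀ a b : Multiplicative (ZMod 2), a ≠ 1 → b ≠ 1 → a = b := by decide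
  intro g hg h hh
  exact e.injective <| Prod.ext (eq_of_ne_one _ _ (fst_ne_one hg) (fst_ne_one hh))
    ((snd_eq_one hg).trans (snd_eq_one hh).symm)

lemma not_isSquare_mul_of_prime_ne {M : Type*} [CommMonoidWithZero M] [IsCancelMulZero M]
    [Subsingleton Mˣ] {P Q : M} (hP : Prime P) (hQ : Prime Q) (hPQ : P ≠ Q) :
    ¬ IsSquare (P * Q) := by
  rintro ⟨J, hJ⟩
  obtain ⟨I, rfl⟩ : P ∣ J := (hP.dvd_or_dvd ⟨Q, hJ.symm⟩).elim id id
  have hQ' : Q = P * (I * I) := mul_left_cancel₀ hP.ne_zero (by rw [hJ]; ac_rfl)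
  exact hPQ (associated_iff_eq.mp (hP.associated_of_dvd hQ ⟨_, hQ'⟩))

end InvolutionsAndSquares

section Ideal

lemma span_pair_sq_eq_span_singleton {R : Type*} [CommRing R] {a b t : R} (hab : IsCoprime a b)
    (ht : t ^ 2 = a * b) : Ideal.span {a, t} ^ 2 = Ideal.span {a} := by
  apply le_antisymm
  · rw [sq, Ideal.span_pair_mul_span_pair, Ideal.span_le]
    rintro x (rfl | rfl | rfl | rfl) <;> simp only [SetLike.mem_coe, Ideal.mem_span_singleton]
    · exact dvd_mul_right a a
    · exact dvd_mul_right a t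
    · exact dvd_mul_left a t
    · exact ⟨b, by rw [← sq, ht]⟩
  · obtain ⟨x, y, hxy⟩ := hab
    have ha : a = x * a ^ 2 + y * t ^ 2 := by rw [ht]; linear_combination -a * hxy
    have ha_mem : a ∈ Ideal.span {a, t} := Ideal.subset_span (Set.mem_insert a {t})
    have ht_mem : t ∈ Ideal.span {a, t} := Ideal.subset_span (Set.mem_insert_of_mem a rfl)
    rw [Ideal.span_singleton_le_iff_mem]
    exact (congrArg (· ∈ Ideal.span {a, t} ^ 2) ha).mpr <| add_mem
      (Ideal.mul_mem_left _ x (Ideal.pow_mem_pow ha_mem 2))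
      (Ideal.mul_mem_left _ y (Ideal.pow_mem_pow ht_mem 2))

variable {R : Type*} [CommRing R] [IsDedekindDomain R]

lemma orderOf_mk0_eq_two {I : Ideal R} (hI0 : I ∈ nonZeroDivisors (Ideal R))
    (hI : ¬ I.IsPrincipal) (hI2 : (I ^ 2).IsPrincipal) :
    orderOf (ClassGroup.mk0 ⟨I, hI0⟩) = 2 := by
  refine orderOf_eq_prime ?_ (mt (ClassGroup.mk0_eq_one_iff hI0).mp hI)
  rw [← map_pow]
  exact (ClassGroup.mk0_eq_one_iff (pow_mem hI0 2)).mpr hI2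

lemma isPrincipal_mul_of_isPrincipal_sq (hCl : {g : ClassGroup R | orderOf g = 2}.Subsingleton)
    {I J : Ideal R} (hI : ¬ I.IsPrincipal) (hI2 : (I ^ 2).IsPrincipal)
    (hJ : ¬ J.IsPrincipal) (hJ2 : (J ^ 2).IsPrincipal) : (I * J).IsPrincipal := by
  have mem_nonZeroDivisors {I : Ideal R} (hI : ¬ I.IsPrincipal) : I ∈ nonZeroDivisors (Ideal R) :=
    mem_nonZeroDivisors_of_ne_zero fun h ↦ hI (h ▸ bot_isPrincipal)
  have hI0 := mem_nonZeroDivisors hI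
  have hJ0 := mem_nonZeroDivisors hJ
  have hIJ : ClassGroup.mk0 ⟨I, hI0⟩ = ClassGroup.mk0 ⟨J, hJ0⟩ :=
    hCl (orderOf_mk0_eq_two hI0 hI hI2) (orderOf_mk0_eq_two hJ0 hJ hJ2)
  have hmul : ClassGroup.mk0 (⟨I, hI0⟩ * ⟨J, hJ0⟩) = 1 := by
    rw [map_mul, hIJ, ← sq]
    exact orderOf_dvd_iff_pow_eq_one.mp (orderOf_mk0_eq_two hJ0 hJ hJ2).dvd
  exact (ClassGroup.mk0_eq_one_iff (mul_mem hI0 hJ0)).mp hmul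

end Ideal

section LegendreSymbol

variable {p : ℕ} [Fact p.Prime]

lemma two_ne_zero_of_legendreSym_eq_neg_one {a : ℤ} (ha : legendreSym p a = -1) :
    (2 : ZMod p) ≠ 0 := fun h2 ↦ by
  have hchar : ringChar (ZMod p) = 2 := by
    have := CharTwo.of_one_ne_zero_of_two_eq_zero (one_ne_zero (α := ZMod p)) h2
    exact ringChar.eq_iff.mpr this
  exact legendreSym.eq_neg_one_iff p |>.mp ha (FiniteField.isSquare_of_char_two hchar _)

lemma legendreSym_eq_one_of_sq_add_mul_sq (hp2 : (2 : ZMod p) ≠ 0) {X Y m n : ℤ}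
    (hn : (n : ZMod p) ≠ 0) (h : X ^ 2 + p * m * Y ^ 2 = 4 * n) : legendreSym p n = 1 := by
  rw [legendreSym.eq_one_iff p hn]
  have hX : (X : ZMod p) ^ 2 = 2 ^ 2 * n := by
    have := congrArg (Int.cast : ℤ → ZMod p) h
    push_cast at this
    rw [CharP.cast_eq_zero] at this
    linear_combination this
  exact ⟨X / 2, by field_simp; rw [hX]; ring⟩

lemma legendreSym_eq_of_sq_add_mul_sq (hp2 : (2 : ZMod p) ≠ 0) {X Y m n : ℤ}
    (hn : (n : ZMod p) ≠ 0) (h : X ^ 2 + p * m * Y ^ 2 = 4 * n * p) :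
    legendreSym p n = legendreSym p m := by
  have hp : Prime (p : ℤ) := Nat.prime_iff_prime_int.mp Fact.out
  obtain ⟨Z, rfl⟩ : (p : ℤ) ∣ X :=
    hp.dvd_of_dvd_pow (n := 2) ⟨4 * n - m * Y ^ 2, by linear_combination h⟩
  have hZ : p * Z ^ 2 + m * Y ^ 2 = 2 ^ 2 * n :=
    mul_left_cancel₀ hp.ne_zero (by linear_combination h)
  have hmod : (m * Y ^ 2 : ZMod p) = 2 ^ 2 * n := by
    have := congrArg (Int.cast : ℤ → ZMod p) hZ
    push_cast at this
    rw [CharP.cast_eq_zero] at this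
    linear_combination this
  have hY : (Y : ZMod p) ≠ 0 := fun hY ↦ by
    rw [hY, zero_pow two_ne_zero, mul_zero, zero_eq_mul] at hmod
    exact hmod.elim (pow_ne_zero 2 hp2) hn
  calc legendreSym p n = legendreSym p (2 ^ 2 * n) := by
        rw [legendreSym.mul, legendreSym.sq_one' p (by exact_mod_cast hp2), one_mul]
    _ = legendreSym p (m * Y ^ 2) := by
        simp only [legendreSym, Int.cast_mul, Int.cast_pow, Int.cast_ofNat, hmod]
    _ = legendreSym p m := by rw [legendreSym.mul, legendreSym.sq_one' p hY, mul_one]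

end LegendreSymbol

section QuadraticExtension

open Polynomial IntermediateField

variable {F E : Type*} [Field F] [Field E] [Algebra F E] {s : E} {c : F}

lemma notMem_range_algebraMap_of_sq_eq (hs : s ^ 2 = algebraMap F E c) (hc : ¬ IsSquare c) :
    s ∉ Set.range (algebraMap F E) := by
  rintro ⟨r, rfl⟩
  refine hc ⟨r, (algebraMap F E).injective ?_⟩
  rw [← hs, map_mul, sq]

lemma isQuadraticExtension_adjoin_simple (hs : s ^ 2 = algebraMap F E c) (hc : ¬ IsSquare c) :
    Algebra.IsQuadraticExtension F F⟮s⟯ where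
  finrank_eq_two' := by
    have hirr : Irreducible (X ^ 2 - C c) :=
      X_pow_sub_C_irreducible_of_prime Nat.prime_two fun b hb ↦ hc ⟨b, by rw [← hb, sq]⟩
    have hmin : X ^ 2 - C c = minpoly F s :=
      minpoly.eq_of_irreducible_of_monic hirr (by simp [hs]) (monic_X_pow_sub_C c two_ne_zero)
    have hint : IsIntegral F s := .of_pow two_pos (hs ▸ isIntegral_algebraMap)
    rw [adjoin.finrank hint, ← hmin, natDegree_X_pow_sub_C]

variable [Algebra.IsQuadraticExtension F E]

/-- The basis `1, s` of a quadratic extension `E / F`, for `s ∈ E` outside `F`. -/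
noncomputable def basisOneGen (hs : s ∉ Set.range (algebraMap F E)) :
    Module.Basis (Fin 2) F E :=
  basisOfLinearIndependentOfCardEqFinrank (b := ![1, s])
    (by
      rw [LinearIndependent.pair_iff' one_ne_zero]
      exact fun a ha ↦ hs ⟨a, by rw [← ha, Algebra.smul_def, mul_one]⟩)
    (by simp [Algebra.IsQuadraticExtension.finrank_eq_two F E])

lemma coe_basisOneGen (hs : s ∉ Set.range (algebraMap F E)) : ⇑(basisOneGen hs) = ![1, s] :=
  coe_basisOfLinearIndependentOfCardEqFinrank _ _

lemma exists_eq_smul_one_add_smul (hs : s ∉ Set.range (algebraMap F E)) (x : E) :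
    ∃ a b : F, x = a • 1 + b • s := by
  refine ⟨(basisOneGen hs).repr x 0, (basisOneGen hs).repr x 1, ?_⟩
  conv_lhs => rw [← (basisOneGen hs).sum_repr x]
  simp [coe_basisOneGen]

lemma leftMulMatrix_basisOneGen (hs : s ∉ Set.range (algebraMap F E))
    (hsc : s ^ 2 = algebraMap F E c) (a b : F) :
    Algebra.leftMulMatrix (basisOneGen hs) (a • 1 + b • s) = !![a, b * c; b, a] := by
  have hmul_one : (a • 1 + b • s) * basisOneGen hs 0 =
      a • basisOneGen hs 0 + b • basisOneGen hs 1 := by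
    simp [coe_basisOneGen]
  have hmul_gen : (a • 1 + b • s) * basisOneGen hs 1 =
      (b * c) • basisOneGen hs 0 + a • basisOneGen hs 1 := by
    simp only [coe_basisOneGen, Matrix.cons_val_zero, Matrix.cons_val_one, Algebra.smul_def,
      map_mul, ← hsc]
    ring
  ext i j
  rw [Algebra.leftMulMatrix_eq_repr_mul]
  fin_cases j
  · simp only [Fin.zero_eta]
    rw [hmul_one]
    fin_cases i <;> simp
  · simp only [Fin.mk_one]
    rw [hmul_gen]
    fin_cases i <;> simp

lemma norm_smul_one_add_smul (hs : s ^ 2 = algebraMap F E c) (hc : ¬ IsSquare c) (a b : F) :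
    Algebra.norm F (a • 1 + b • s) = a ^ 2 - c * b ^ 2 := by
  rw [Algebra.norm_eq_matrix_det (basisOneGen (notMem_range_algebraMap_of_sq_eq hs hc)),
    leftMulMatrix_basisOneGen _ hs, Matrix.det_fin_two_of]
  ring

lemma trace_smul_one_add_smul (hs : s ^ 2 = algebraMap F E c) (hc : ¬ IsSquare c) (a b : F) :
    Algebra.trace F E (a • 1 + b • s) = 2 * a := by
  rw [Algebra.trace_eq_matrix_trace (basisOneGen (notMem_range_algebraMap_of_sq_eq hs hc)),
    leftMulMatrix_basisOneGen _ hs, Matrix.trace_fin_two_of, two_mul]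

end QuadraticExtension

namespace Qsqrt

lemma gen_sq (m : ℤ) : ((m : ℂ) ^ ((1 : ℂ) / 2)) ^ 2 = m := by
  simpa only [one_div, Nat.cast_ofNat] using Complex.cpow_nat_inv_pow (m : ℂ) two_ne_zero

lemma exists_sq_eq (m : ℤ) : ∃ s : Qsqrt m, s ^ 2 = m :=
  ⟨⟨_, IntermediateField.mem_adjoin_simple_self ℚ _⟩, Subtype.ext (gen_sq m)⟩

lemma isQuadraticExtension {m : ℤ} (hm : m < 0) : Algebra.IsQuadraticExtension ℚ (Qsqrt m) :=
  isQuadraticExtension_adjoin_simple (c := (m : ℚ)) (by rw [gen_sq, map_intCast])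
    (not_isSquare_of_neg (by exact_mod_cast hm))

instance (m : ℤ) : NumberField (Qsqrt m) where
  to_finiteDimensional := IntermediateField.adjoin.finiteDimensional <|
    .of_pow two_pos (by rw [gen_sq]; exact isIntegral_intCast m)

end Qsqrt

section QuadraticField

variable {K : Type*} [Field K] [NumberField K] [Algebra.IsQuadraticExtension ℚ K]

lemma absNorm_span_natCast_eq_sq (n : ℕ) : Ideal.absNorm (Ideal.span {(n : 𝓞 K)}) = n ^ 2 := by
  rw [Ideal.absNorm_span_natCast, RingOfIntegers.rank,
    Algebra.IsQuadraticExtension.finrank_eq_two]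

lemma absNorm_eq_of_mul_eq_span {ℓ : ℕ} (hℓ : ℓ.Prime) {P Q I : Ideal (𝓞 K)}
    (hP : P.IsPrime) (hQ : Q.IsPrime) (hI : I.IsPrime) (hPQ : P * Q = Ideal.span {(ℓ : 𝓞 K)})
    (hmem : (ℓ : 𝓞 K) ∈ I) : Ideal.absNorm I = ℓ := by
  have hPQ0 : P * Q ≠ ⊥ := by
    rw [hPQ, Ne, Ideal.span_singleton_eq_bot]
    exact_mod_cast hℓ.ne_zero
  have hnorm : Ideal.absNorm P * Ideal.absNorm Q = ℓ ^ 2 := by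
    rw [← map_mul, hPQ, absNorm_span_natCast_eq_sq]
  obtain ⟨hNP, hNQ⟩ := (hℓ.mul_eq_prime_sq_iff (mt Ideal.absNorm_eq_one_iff.mp hP.ne_top)
    (mt Ideal.absNorm_eq_one_iff.mp hQ.ne_top)).mp hnorm
  have hle : P * Q ≤ I := by rwa [hPQ, Ideal.span_singleton_le_iff_mem]
  rcases hI.mul_le.mp hle with h | h
  · rw [← (hP.isMaximal (left_ne_zero_of_mul hPQ0)).eq_of_le hI.ne_top h, hNP]
  · rw [← (hQ.isMaximal (right_ne_zero_of_mul hPQ0)).eq_of_le hI.ne_top h, hNQ]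

lemma exists_sq_sub_mul_sq_eq_four_mul_norm {d : ℤ} (hd : Squarefree d) (hdsq : ¬ IsSquare (d : ℚ))
    {s : K} (hs : s ^ 2 = d) (x : 𝓞 K) :
    ∃ X Y : ℤ, X ^ 2 - d * Y ^ 2 = 4 * Algebra.norm ℤ x := by
  have hs' : s ^ 2 = algebraMap ℚ K d := by rw [hs, map_intCast]
  obtain ⟨a, b, hab⟩ :=
    exists_eq_smul_one_add_smul (notMem_range_algebraMap_of_sq_eq hs' hdsq) (x : K)
  have hnorm : (Algebra.norm ℤ x : ℚ) = a ^ 2 - d * b ^ 2 := by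
    rw [Algebra.coe_norm_int, hab, norm_smul_one_add_smul hs' hdsq]
  obtain ⟨X, hX⟩ : ∃ X : ℤ, (X : ℚ) = 2 * a := by
    rw [← trace_smul_one_add_smul hs' hdsq, ← hab, ← Algebra.coe_trace_int]
    exact ⟨_, rfl⟩
  -- `2a` is the trace of `x`, so `d (2b)²` is an integer, and hence `2b` is one.
  obtain ⟨Y, hY⟩ := isInteger_of_squarefree_mul_sq hd (x := 2 * b)
    ⟨X ^ 2 - 4 * Algebra.norm ℤ x, by
      simp only [eq_intCast, Int.cast_sub, Int.cast_pow, Int.cast_mul, Int.cast_ofNat, hX, hnorm]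
      ring⟩
  rw [eq_intCast] at hY
  refine ⟨X, Y, ?_⟩
  have : (X ^ 2 - d * Y ^ 2 : ℚ) = 4 * Algebra.norm ℤ x := by rw [hX, hY, hnorm]; ring
  exact_mod_cast this

variable {d : ℕ} {s : K}

lemma exists_sq_add_mul_sq_eq_four_mul_absNorm (hd : Squarefree d) (hs : s ^ 2 = -d)
    {I : Ideal (𝓞 K)} (hI : I.IsPrincipal) :
    ∃ X Y : ℤ, X ^ 2 + d * Y ^ 2 = 4 * Ideal.absNorm I := by
  obtain ⟨x, rfl⟩ := hI
  have hneg : ¬ IsSquare ((-d : ℤ) : ℚ) :=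
    not_isSquare_of_neg (by exact_mod_cast Int.neg_neg_of_pos (by exact_mod_cast hd.ne_zero.bot_lt))
  obtain ⟨X, Y, hXY⟩ := exists_sq_sub_mul_sq_eq_four_mul_norm
    (Int.squarefree_natAbs.mp (by simpa using hd)) hneg (hs.trans (by push_cast; rfl)) x
  refine ⟨X, Y, ?_⟩
  have hnonneg : 0 ≤ Algebra.norm ℤ x := by nlinarith [sq_nonneg X, sq_nonneg Y]
  rw [Ideal.submodule_span_eq, Ideal.absNorm_span_singleton, Int.natAbs_of_nonneg hnonneg]
  linear_combination hXY

lemma exists_sq_eq_span_natCast {p m : ℕ} (hpm : p.Coprime m) (hs : s ^ 2 = -(p * m : ℕ)) :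
    ∃ P : Ideal (𝓞 K), P ^ 2 = Ideal.span {(p : 𝓞 K)} ∧ Ideal.absNorm P = p := by
  have hint : IsIntegral ℤ s :=
    .of_pow two_pos (hs ▸ (isIntegral_natCast (p * m)).neg)
  obtain ⟨t, rfl⟩ : ∃ t : 𝓞 K, (t : K) = s := ⟨⟨s, hint⟩, rfl⟩
  have ht : t ^ 2 = p * -m := RingOfIntegers.ext (by push_cast at hs ⊢; rw [hs]; ring)
  have hcop : IsCoprime (p : 𝓞 K) (-m) := by
    simpa using (hpm.isCoprime.map (Int.castRingHom (𝓞 K))).neg_right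
  have hsq := span_pair_sq_eq_span_singleton hcop ht
  refine ⟨_, hsq, Nat.pow_left_injective two_ne_zero ?_⟩
  simpa only [map_pow, absNorm_span_natCast_eq_sq] using congrArg Ideal.absNorm hsq

end QuadraticField

section GenusCharacter

variable {K : Type*} [Field K] [NumberField K] [Algebra.IsQuadraticExtension ℚ K]
  {p q : ℕ} [Fact p.Prime] {s : K}

lemma squarefree_mul_of_legendreSym_eq_neg_one (hq : Squarefree q) (hpq : legendreSym p q = -1) :
    Squarefree (p * q) := by
  have hp : p.Prime := Fact.out
  have hndvd : ¬ p ∣ q := fun h ↦ by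
    have hzero : legendreSym p q = 0 :=
      (legendreSym.eq_zero_iff p q).mpr (by exact_mod_cast (ZMod.natCast_eq_zero_iff q p).mpr h)
    exact absurd (hzero.symm.trans hpq) (by decide)
  exact (Nat.squarefree_mul (hp.coprime_iff_not_dvd.mpr hndvd)).mpr ⟨hp.prime.squarefree, hq⟩

lemma exists_not_isPrincipal_sq_eq_span_natCast (hd : Squarefree (p * q))
    (hs : s ^ 2 = -(p * q : ℕ)) (hpq : legendreSym p q = -1) :
    ∃ P : Ideal (𝓞 K), P ^ 2 = Ideal.span {(p : 𝓞 K)} ∧ Ideal.absNorm P = p ∧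
      ¬ P.IsPrincipal := by
  obtain ⟨P, hP2, hPp⟩ := exists_sq_eq_span_natCast (Nat.coprime_of_squarefree_mul hd) hs
  refine ⟨P, hP2, hPp, fun hP ↦ ?_⟩
  obtain ⟨X, Y, hXY⟩ := exists_sq_add_mul_sq_eq_four_mul_absNorm hd hs hP
  have h1 : legendreSym p 1 = legendreSym p q :=
    legendreSym_eq_of_sq_add_mul_sq (two_ne_zero_of_legendreSym_eq_neg_one hpq) (by simp)
      (X := X) (Y := Y) (by rw [hPp] at hXY; push_cast at hXY; rw [hXY, mul_one])
  rw [legendreSym.at_one, hpq] at h1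
  exact absurd h1 (by decide)

theorem legendreSym_absNorm_of_isPrincipal (hp2 : (2 : ZMod p) ≠ 0) (hd : Squarefree (p * q))
    (hs : s ^ 2 = -(p * q : ℕ)) {I : Ideal (𝓞 K)} (hIp : (Ideal.absNorm I : ZMod p) ≠ 0)
    (hI : I.IsPrincipal) :
    legendreSym p (Ideal.absNorm I) = 1 ∧
      ∃ X Y : ℤ, X ^ 2 + p * q * Y ^ 2 = 4 * Ideal.absNorm I := by
  obtain ⟨X, Y, hXY⟩ := exists_sq_add_mul_sq_eq_four_mul_absNorm hd hs hI
  push_cast at hXY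
  exact ⟨legendreSym_eq_one_of_sq_add_mul_sq hp2 (by exact_mod_cast hIp) hXY, X, Y, hXY⟩

theorem legendreSym_absNorm_of_not_isPrincipal (hd : Squarefree (p * q))
    (hs : s ^ 2 = -(p * q : ℕ)) (hpq : legendreSym p q = -1)
    (hCl : {g : ClassGroup (𝓞 K) | orderOf g = 2}.Subsingleton) {I : Ideal (𝓞 K)}
    (hIp : (Ideal.absNorm I : ZMod p) ≠ 0) (hI : ¬ I.IsPrincipal) (hI2 : (I ^ 2).IsPrincipal) :
    legendreSym p (Ideal.absNorm I) = -1 ∧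
      ∃ X Y : ℤ, X ^ 2 + p * q * Y ^ 2 = 4 * Ideal.absNorm I * p := by
  obtain ⟨P, hP2, hPp, hP⟩ := exists_not_isPrincipal_sq_eq_span_natCast hd hs hpq
  have hIP : (I * P).IsPrincipal :=
    isPrincipal_mul_of_isPrincipal_sq hCl hI hI2 hP (hP2 ▸ ⟨_, rfl⟩)
  obtain ⟨X, Y, hXY⟩ := exists_sq_add_mul_sq_eq_four_mul_absNorm hd hs hIP
  rw [map_mul, hPp] at hXY
  push_cast at hXY
  rw [← mul_assoc] at hXY
  refine ⟨?_, X, Y, hXY⟩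
  rw [← hpq]
  exact legendreSym_eq_of_sq_add_mul_sq (two_ne_zero_of_legendreSym_eq_neg_one hpq)
    (by exact_mod_cast hIp) hXY

lemma natCast_ne_zero_of_mul_eq_span (hd : Squarefree (p * q)) (hs : s ^ 2 = -(p * q : ℕ))
    {ℓ : ℕ} (hℓ : ℓ.Prime) {P Q : Ideal (𝓞 K)} (hP : P.IsPrime) (hQ : Q.IsPrime) (hne : P ≠ Q)
    (hPQ : P * Q = Ideal.span {(ℓ : 𝓞 K)}) : (ℓ : ZMod p) ≠ 0 := by
  intro h
  obtain rfl : p = ℓ :=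
    (Nat.prime_dvd_prime_iff_eq Fact.out hℓ).mp ((ZMod.natCast_eq_zero_iff ℓ p).mp h)
  obtain ⟨J, hJ, -⟩ := exists_sq_eq_span_natCast (Nat.coprime_of_squarefree_mul hd) hs
  have hPQ0 : P * Q ≠ ⊥ := by
    rw [hPQ, Ne, Ideal.span_singleton_eq_bot]
    exact_mod_cast hℓ.ne_zero
  exact not_isSquare_mul_of_prime_ne (Ideal.prime_of_isPrime (left_ne_zero_of_mul hPQ0) hP)
    (Ideal.prime_of_isPrime (right_ne_zero_of_mul hPQ0) hQ) hne ⟨J, by rw [hPQ, ← hJ, sq]⟩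

theorem stmt17_general (hq : Squarefree q) (hpq : legendreSym p q = -1)
    (hs : s ^ 2 = -(p * q : ℕ)) (hCl : {g : ClassGroup (𝓞 K) | orderOf g = 2}.Subsingleton)
    {ℓ : ℕ} (hℓ : ℓ.Prime)
    (hsplit : ∃ P Q : Ideal (𝓞 K), P.IsPrime ∧ Q.IsPrime ∧ P ≠ Q ∧
      P * Q = Ideal.span {(ℓ : 𝓞 K)})
    {𝔩 : Ideal (𝓞 K)} (h𝔩 : 𝔩.IsPrime) (hmem : (ℓ : 𝓞 K) ∈ 𝔩) {u : ℕ} (hu : Odd u) :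
    (IsLeast {n : ℕ | 0 < n ∧ (𝔩 ^ n).IsPrincipal} (2 * u) →
      legendreSym p ℓ = -1 ∧ ∃ X Y : ℤ, X ^ 2 + p * q * Y ^ 2 = 4 * ℓ ^ u * p) ∧
    (IsLeast {n : ℕ | 0 < n ∧ (𝔩 ^ n).IsPrincipal} u →
      legendreSym p ℓ = 1 ∧ ∃ X Y : ℤ, X ^ 2 + p * q * Y ^ 2 = 4 * ℓ ^ u) := by
  obtain ⟨P, Q, hP, hQ, hne, hPQ⟩ := hsplit
  have hd : Squarefree (p * q) := squarefree_mul_of_legendreSym_eq_neg_one hq hpq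
  have hℓp : (ℓ : ZMod p) ≠ 0 := natCast_ne_zero_of_mul_eq_span hd hs hℓ hP hQ hne hPQ
  have hnorm : Ideal.absNorm (𝔩 ^ u) = ℓ ^ u := by
    rw [map_pow, absNorm_eq_of_mul_eq_span hℓ hP hQ h𝔩 hPQ hmem]
  have hnormp : (Ideal.absNorm (𝔩 ^ u) : ZMod p) ≠ 0 := by
    rw [hnorm, Nat.cast_pow]
    exact pow_ne_zero u hℓp
  have hleg : legendreSym p (Ideal.absNorm (𝔩 ^ u)) = legendreSym p ℓ ^ u := by
    rw [hnorm, Nat.cast_pow]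
    exact map_pow (legendreSym.hom p) _ u
  constructor
  · rintro ⟨⟨-, h2u⟩, hmin⟩
    have hnot : ¬ (𝔩 ^ u).IsPrincipal := fun h ↦ by
      have := hmin ⟨hu.pos, h⟩
      have := hu.pos
      omega
    obtain ⟨h1, hXY⟩ := legendreSym_absNorm_of_not_isPrincipal hd hs hpq hCl hnormp hnot
      (by rwa [← pow_mul, mul_comm])
    refine ⟨hu.pow_inj.mp ?_, by simpa only [hnorm, Nat.cast_pow] using hXY⟩
    rw [← hleg, h1, hu.neg_one_pow]
  · rintro ⟨⟨-, hprin⟩, -⟩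
    obtain ⟨h1, hXY⟩ := legendreSym_absNorm_of_isPrincipal
      (two_ne_zero_of_legendreSym_eq_neg_one hpq) hd hs hnormp hprin
    refine ⟨hu.pow_inj.mp ?_, by simpa only [hnorm, Nat.cast_pow] using hXY⟩
    rw [← hleg, h1, one_pow]

end GenusCharacter

/-- Norm-equation criterion (case `p ≡ 3 (mod 4)` of Theorem on splitting primes):
let `u` be odd and positive, `p ≡ 3 (mod 4)`, `q ≡ 1 (mod 4)` primes with `(q/p) = -1`,
and `L = ℚ(√(-pq))` with `Cl(L) ≅ C₂ × A`, `A` of odd order.  If `ell` is an odd prime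
splitting in `L` and `𝔩` is a prime of `L` above `ell` whose class has order `2u`
(i.e. `2u` is the least positive `n` with `𝔩ⁿ` principal), then `(ell/p) = -1` and
`X² + pqY² = 4·ellᵘ·p` has an integer solution; if the class of `𝔩` has order `u`,
then `(ell/p) = 1` and `X² + pqY² = 4·ellᵘ` has an integer solution. -/
theorem stmt17 (u : ℕ) (hu : Odd u) (hupos : 0 < u)
    (p q : ℕ) (hp : p.Prime) (hq : q.Prime)
    (hp4 : p % 4 = 3) (hq4 : q % 4 = 1)
    (hleg : @legendreSym p ⟨hp⟩ (q : ℤ) = -1)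
    (L : IntermediateField ℚ ℂ) (hL : L = Qsqrt (-((p : ℤ) * q)))
    (A : Type) (_ : CommGroup A) (hAfin : Finite A) (hAodd : Odd (Nat.card A))
    (hiso : Nonempty (ClassGroup (𝓞 L) ≃* (Multiplicative (ZMod 2) × A)))
    (ell : ℕ) (hell : ell.Prime) (hellodd : Odd ell)
    (hsplit : ∃ P Q : Ideal (𝓞 L), P.IsPrime ∧ Q.IsPrime ∧ P ≠ Q ∧
      P * Q = Ideal.span {(ell : 𝓞 L)})
    (𝔩 : Ideal (𝓞 L)) (h𝔩prime : 𝔩.IsPrime) (h𝔩ne : 𝔩 ≠ ⊥)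
    (h𝔩mem : (ell : 𝓞 L) ∈ 𝔩) :
    (IsLeast {n : ℕ | 0 < n ∧ (𝔩 ^ n).IsPrincipal} (2 * u) →
      @legendreSym p ⟨hp⟩ (ell : ℤ) = -1 ∧
        ∃ X Y : ℤ, X ^ 2 + (p : ℤ) * q * Y ^ 2 = 4 * (ell : ℤ) ^ u * p) ∧
    (IsLeast {n : ℕ | 0 < n ∧ (𝔩 ^ n).IsPrincipal} u →
      @legendreSym p ⟨hp⟩ (ell : ℤ) = 1 ∧
        ∃ X Y : ℤ, X ^ 2 + (p : ℤ) * q * Y ^ 2 = 4 * (ell : ℤ) ^ u) := by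
  subst hL
  have : Fact p.Prime := ⟨hp⟩
  have hneg : -((p : ℤ) * q) < 0 := by simp [hp.pos, hq.pos]
  have := Qsqrt.isQuadraticExtension hneg
  obtain ⟨s, hs⟩ := Qsqrt.exists_sq_eq (-((p : ℤ) * q))
  obtain ⟨e⟩ := hiso
  exact stmt17_general hq.prime.squarefree hleg (hs.trans (by push_cast; rfl))
    (subsingleton_setOf_orderOf_eq_two_of_mulEquiv hAodd e) hell hsplit h𝔩prime h𝔩mem hu
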